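/- Let ϑ, ϑ₁, ϑ₂ be Beurling weights on ℝ^d and 1 ≤ p, q, r < ∞. Then A^{p,1,q,r}_{ϑ₁,ϑ}(ℝ^d) is continuously embedded in A^{p,1,q,r}_{ϑ₂,ϑ}(ℝ^d) (i.e. A^{p,1,q,r}_{ϑ₁,ϑ}(ℝ^d) ⊆ A^{p,1,q,r}_{ϑ₂,ϑ}(ℝ^d) and there exists C > 0 with ‖f‖_{A_{ϑ₂,ϑ}} ≤ C·‖f‖_{A_{ϑ₁,ϑ}} for all f ∈ A^{p,1,q,r}_{ϑ₁,ϑ}(ℝ^d)) if and only if ϑ₂ ≺ ϑ₁. -/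

import Mathlib

open MeasureTheory Filter Topology
open scoped ENNReal NNReal BigOperators

noncomputable section

/-- The unit cube `α + [0,1)^d` at the integer point `α ∈ ℤ^d`. -/
def cube {d : ℕ} (α : Fin d → ℤ) : Set (Fin d → ℝ) :=
  Set.univ.pi fun i => Set.Ico (α i : ℝ) ((α i : ℝ) + 1)

/-- The weighted amalgam norm `‖f‖_{pq,ω}` of the space `(L^p_ω, ℓ^q)`. -/
def amalgamNorm {d : ℕ} (p q : ℝ) (ω : (Fin d → ℝ) → ℝ) (f : (Fin d → ℝ) → ℂ) : ℝ≥0∞ :=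
  (∑' α : Fin d → ℤ,
      (eLpNorm (fun x => ω x • f x) (ENNReal.ofReal p) (volume.restrict (cube α))) ^ q) ^ (1 / q)

/-- Membership in the weighted amalgam space `(L^p_ω, ℓ^q)`. -/
def MemAmalgam {d : ℕ} (p q : ℝ) (ω : (Fin d → ℝ) → ℝ) (f : (Fin d → ℝ) → ℂ) : Prop :=
  Measurable f ∧ amalgamNorm p q ω f < ⊤

/-- A Beurling weight: measurable, `ϑ ≥ 1` and submultiplicative. -/
def IsBeurling {d : ℕ} (ϑ : (Fin d → ℝ) → ℝ) : Prop :=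
  Measurable ϑ ∧ (∀ x, 1 ≤ ϑ x) ∧ ∀ x y, ϑ (x + y) ≤ ϑ x * ϑ y

/-- The Fourier transform `f̂(ξ) = ∫ f(x) e^{-2πi⟨x,ξ⟩} dx`. -/
def fourierT {d : ℕ} (f : (Fin d → ℝ) → ℂ) (ξ : Fin d → ℝ) : ℂ :=
  ∫ x : Fin d → ℝ,
    Complex.exp (-(2 * (Real.pi : ℂ) * Complex.I * ∑ i, (x i : ℂ) * (ξ i : ℂ))) * f x

/-- The norm of `A^{p,1,q,r}_{ϑ₁,ϑ₂}(ℝ^d)`. -/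
def ANorm {d : ℕ} (p q r : ℝ) (ϑ₁ ϑ₂ : (Fin d → ℝ) → ℝ) (f : (Fin d → ℝ) → ℂ) : ℝ≥0∞ :=
  amalgamNorm p 1 ϑ₁ f + amalgamNorm q r ϑ₂ (fourierT f)

/-- Membership in `A^{p,1,q,r}_{ϑ₁,ϑ₂}(ℝ^d)`. -/
def MemA {d : ℕ} (p q r : ℝ) (ϑ₁ ϑ₂ : (Fin d → ℝ) → ℝ) (f : (Fin d → ℝ) → ℂ) : Prop :=
  MemAmalgam p 1 ϑ₁ f ∧ MemAmalgam q r ϑ₂ (fourierT f)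

/-- Convolution `(f∗g)(x) = ∫ f(x−t)g(t) dt`. -/
def convF {d : ℕ} (f g : (Fin d → ℝ) → ℂ) (x : Fin d → ℝ) : ℂ :=
  ∫ t : Fin d → ℝ, f (x - t) * g t

/-- `ϑ ≺ ϑ'` : domination of weights up to a constant. -/
def Prec {d : ℕ} (ϑ ϑ' : (Fin d → ℝ) → ℝ) : Prop :=
  ∃ C : ℝ, 0 < C ∧ ∀ x, ϑ x ≤ C * ϑ' x

/-- The Beurling–Domar condition `∑_{n≥1} log ϑ(nx)/n² < ∞`. -/
def BeurlingDomar {d : ℕ} (ϑ : (Fin d → ℝ) → ℝ) : Prop :=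
  ∀ x : Fin d → ℝ, Summable fun n : ℕ => Real.log (ϑ ((n : ℝ) • x)) / (n : ℝ) ^ 2

/-- `w` does not tend to zero as `|x| → ∞`. -/
def NotVanishingAtInfty {d : ℕ} (w : (Fin d → ℝ) → ℝ) : Prop :=
  ∃ δ : ℝ, 0 < δ ∧ ∀ R : ℝ, 0 < R → ∃ x : Fin d → ℝ, R < ‖x‖ ∧ δ ≤ w x

end

noncomputable section

lemma beurling_exp {d : ℕ} {w : (Fin d → ℝ) → ℝ} (h : IsBeurling w) :
    ∃ M a : ℝ, 0 < M ∧ 0 ≤ a ∧ ∀ x, w x ≤ M * Real.exp (a * ‖x‖) := by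
  obtain ⟨hm, h1, hs⟩ := h
  set v : (Fin d → ℝ) → ℝ := fun x => w x * w (-x) with hv
  have hvm : Measurable v := hm.mul (hm.comp measurable_neg)
  have hv1 : ∀ x, 1 ≤ v x := fun x => one_le_mul_of_one_le_of_one_le (h1 x) (h1 _)
  have hwv : ∀ x, w x ≤ v x := fun x => le_mul_of_one_le_right (by linarith [h1 x]) (h1 _)
  have hvs : ∀ x y, v (x + y) ≤ v x * v y := by
    intro x y
    have e1 := hs x y
    have e2 := hs (-x) (-y)
    have : -(x + y) = -x + -y := by abel
    simp only [hv, this]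
    calc w (x + y) * w (-x + -y) ≤ (w x * w y) * (w (-x) * w (-y)) :=
          mul_le_mul e1 e2 (by linarith [h1 (-x + -y)])
            (mul_nonneg (by linarith [h1 x]) (by linarith [h1 y]))
      _ = _ := by ring
  have hvn : ∀ x, v (-x) = v x := by intro x; simp [hv, mul_comm]
  obtain ⟨n, hn⟩ : ∃ n : ℕ, 0 < volume {x | v x ≤ n} := by
    by_contra hcon
    push Not at hcon
    have : volume (⋃ n : ℕ, {x | v x ≤ n}) = 0 :=
      measure_iUnion_null (fun n => le_antisymm (hcon n) bot_le)
    have h2 : (⋃ n : ℕ, {x | v x ≤ n}) = Set.univ := by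
      ext x; simp [exists_nat_ge]
    rw [h2] at this
    exact NeZero.ne (volume : Measure (Fin d → ℝ)) (Measure.measure_univ_eq_zero.1 this)
  have hst := Measure.sub_mem_nhds_zero_of_addHaar_pos (volume : Measure (Fin d → ℝ))
    {x | v x ≤ n} (measurableSet_le hvm measurable_const) hn
  obtain ⟨δ, hδ, hball⟩ := Metric.mem_nhds_iff.1 hst
  have hloc : ∀ x : Fin d → ℝ, ‖x‖ < δ → v x ≤ (n : ℝ) ^ 2 + 1 := by
    intro x hx
    have : x ∈ Metric.ball (0 : Fin d → ℝ) δ := by simpa using hx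
    obtain ⟨a, ha, b, hb, rfl⟩ := hball this
    simp only [Set.mem_ofPred_eq] at ha hb
    have e := hvs a (-b)
    rw [hvn, ← sub_eq_add_neg] at e
    have : v a * v b ≤ n * n :=
      mul_le_mul ha hb (by linarith [hv1 b]) (by positivity)
    simp only at *
    nlinarith
  have hpow : ∀ (k : ℕ) (x : Fin d → ℝ), v (((k : ℝ) + 1) • x) ≤ v x ^ (k + 1) := by
    intro k x
    induction k with
    | zero => simp
    | succ k ih =>
      have : (((k + 1 : ℕ) : ℝ) + 1) • x = ((k : ℝ) + 1) • x + x := by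
        push_cast; rw [add_smul _ 1 x, one_smul]
      rw [this, pow_succ]
      exact (hvs _ _).trans (mul_le_mul_of_nonneg_right ih (by linarith [hv1 x]))
  set L := Real.log ((n : ℝ) ^ 2 + 1) with hL
  have hL0 : 0 ≤ L := Real.log_nonneg (by nlinarith)
  refine ⟨Real.exp L, L / δ, Real.exp_pos _, by positivity, fun x => ?_⟩
  refine (hwv x).trans ?_
  set k := ⌊‖x‖ / δ⌋₊ with hk
  have hk1 : ‖x‖ / δ < k + 1 := Nat.lt_floor_add_one _
  have hk2 : (k : ℝ) ≤ ‖x‖ / δ := Nat.floor_le (by positivity)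
  have hkp : (0 : ℝ) < k + 1 := by positivity
  have e := hpow k (((k : ℝ) + 1)⁻¹ • x)
  rw [smul_smul, mul_inv_cancel₀ hkp.ne', one_smul] at e
  have hnorm : ‖((k : ℝ) + 1)⁻¹ • x‖ < δ := by
    rw [norm_smul, norm_inv, Real.norm_of_nonneg hkp.le, inv_mul_lt_iff₀ hkp]
    rwa [div_lt_iff₀ hδ] at hk1
  have e2 := hloc _ hnorm
  calc v x ≤ _ := e
    _ ≤ ((n : ℝ) ^ 2 + 1) ^ (k + 1) :=
      pow_le_pow_left₀ (by linarith [hv1 (((k : ℝ) + 1)⁻¹ • x)]) e2 _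
    _ = Real.exp (L * (k + 1)) := by
      rw [mul_comm, ← Nat.cast_succ, Real.exp_nat_mul, hL, Real.exp_log (by positivity)]
    _ ≤ Real.exp (L + L / δ * ‖x‖) := by
      apply Real.exp_le_exp.2
      have : L / δ * ‖x‖ = L * (‖x‖ / δ) := by ring
      rw [this]
      nlinarith
    _ = _ := Real.exp_add _ _

lemma norm_le_sum_abs {d : ℕ} (x : Fin d → ℝ) : ‖x‖ ≤ ∑ i, |x i| := by
  refine (pi_norm_le_iff_of_nonneg (Finset.sum_nonneg fun i _ => abs_nonneg _)).2 fun i => ?_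
  exact Finset.single_le_sum (f := fun i => |x i|) (fun i _ => abs_nonneg _) (Finset.mem_univ i)

lemma beurling_gauss {d : ℕ} {w : (Fin d → ℝ) → ℝ} (h : IsBeurling w) :
    ∃ K : ℝ, 0 < K ∧ ∀ x, w x * Real.exp (-Real.pi * ∑ i, x i ^ 2) ≤
      K * Real.exp (-∑ i, |x i|) := by
  obtain ⟨M, a, hM, ha, hb⟩ := beurling_exp h
  refine ⟨M * Real.exp (∑ _i : Fin d, (a + 1) ^ 2), by positivity, fun x => ?_⟩
  calc w x * Real.exp (-Real.pi * ∑ i, x i ^ 2)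
      ≤ (M * Real.exp (a * ∑ i, |x i|)) * Real.exp (-Real.pi * ∑ i, x i ^ 2) := by
        gcongr
        refine (hb x).trans ?_
        gcongr
        exact norm_le_sum_abs x
    _ = M * Real.exp (∑ i, (a * |x i| - Real.pi * x i ^ 2)) := by
        rw [mul_assoc, ← Real.exp_add, Finset.sum_sub_distrib, ← Finset.mul_sum,
          ← Finset.mul_sum, sub_eq_add_neg, neg_mul]
    _ ≤ M * Real.exp (∑ i, ((a + 1) ^ 2 - |x i|)) := by
        refine mul_le_mul_of_nonneg_left (Real.exp_le_exp.2 ?_) hM.le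
        refine Finset.sum_le_sum fun i _ => ?_
        have h3 := Real.pi_gt_three
        rw [← sq_abs (x i)]
        nlinarith [sq_nonneg (a + 1 - 2 * |x i|), sq_nonneg (|x i|), sq_nonneg (a + 1)]
    _ = _ := by
        rw [mul_assoc, ← Real.exp_add, Finset.sum_sub_distrib, sub_eq_add_neg]

lemma tsum_pi_prod (u : ℤ → ℝ≥0∞) (d : ℕ) :
    ∑' α : Fin d → ℤ, ∏ i, u (α i) = (∑' n, u n) ^ d := by
  induction d with
  | zero => simp
  | succ d ih =>
    rw [← (Fin.consEquiv (fun _ : Fin (d + 1) => ℤ)).tsum_eq, ENNReal.tsum_prod']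
    simp only [Fin.consEquiv_apply, Fin.prod_univ_succ, Fin.cons_zero, Fin.cons_succ,
      ENNReal.tsum_mul_left, ENNReal.tsum_mul_right]
    rw [ih, pow_succ, mul_comm]

def uu (n : ℤ) : ℝ≥0∞ := ENNReal.ofReal (Real.exp (-|(n : ℝ)|))

lemma uu_le (n : ℤ) : uu n ≤ 1 := by
  unfold uu
  rw [ENNReal.ofReal_le_one]
  exact Real.exp_le_one_iff.2 (by simp)

lemma uu_sum : ∑' n, uu n ≠ ⊤ := by
  have hs : Summable fun n : ℤ => Real.exp (-|(n : ℝ)|) := by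
    apply Summable.of_nat_of_neg
    · simpa using Real.summable_exp_neg_nat
    · simpa using Real.summable_exp_neg_nat
  exact hs.tsum_ofReal_ne_top

def GG {d : ℕ} (α : Fin d → ℤ) : ℝ≥0∞ :=
  ENNReal.ofReal (Real.exp d) * ∏ i, uu (α i)

def NN (d : ℕ) (q : ℝ) : ℝ≥0∞ := (∑' α : Fin d → ℤ, (GG α) ^ q) ^ (1 / q)

lemma NN_ne_top (d : ℕ) (q : ℝ) (hq : 1 ≤ q) : NN d q ≠ ⊤ := by
  unfold NN
  refine ENNReal.rpow_ne_top_of_nonneg (by positivity) ?_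
  have : ∀ α : Fin d → ℤ, (GG α) ^ q ≤ ENNReal.ofReal (Real.exp d) ^ q * ∏ i, uu (α i) := by
    intro α
    unfold GG
    rw [ENNReal.mul_rpow_of_nonneg _ _ (by linarith)]
    gcongr
    refine (ENNReal.rpow_le_rpow_of_exponent_ge (Finset.prod_le_one' fun i _ => uu_le _) hq).trans ?_
    simp
  refine ne_top_of_le_ne_top ?_ (ENNReal.tsum_le_tsum this)
  rw [ENNReal.tsum_mul_left, tsum_pi_prod]
  exact ENNReal.mul_ne_top (ENNReal.rpow_ne_top_of_nonneg (by linarith) ENNReal.ofReal_ne_top)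
    (ENNReal.pow_ne_top uu_sum)

lemma cube_meas {d : ℕ} (α : Fin d → ℤ) : MeasurableSet (cube α) :=
  MeasurableSet.univ_pi fun _ => measurableSet_Ico

lemma cube_vol {d : ℕ} (α : Fin d → ℤ) : volume (cube α) = 1 := by
  unfold cube
  rw [volume_pi_pi]
  simp

lemma cube_bound {d : ℕ} (α : Fin d → ℤ) (x t : Fin d → ℝ) (hx : x ∈ cube α) :
    ENNReal.ofReal (Real.exp (-∑ i, |x i - t i|)) ≤ GG (α - fun i => ⌊t i⌋) := by
  unfold GG uu
  rw [← ENNReal.ofReal_prod_of_nonneg (fun i _ => (Real.exp_pos _).le),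
    ← ENNReal.ofReal_mul (Real.exp_pos _).le, ← Real.exp_sum, ← Real.exp_add]
  apply ENNReal.ofReal_le_ofReal
  apply Real.exp_le_exp.2
  have : ((d : ℕ) : ℝ) = ∑ _i : Fin d, (1 : ℝ) := by simp
  rw [this, ← Finset.sum_add_distrib, ← Finset.sum_neg_distrib]
  apply Finset.sum_le_sum
  intro i _
  have h := hx i (Set.mem_univ i)
  have h1 := Int.floor_le (t i)
  have h2 := Int.lt_floor_add_one (t i)
  simp only [Set.mem_Ico] at h
  simp only [Pi.sub_apply, Int.cast_sub]
  have : |(α i : ℝ) - ⌊t i⌋| ≤ |x i - t i| + 1 := by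
    rw [abs_le]
    constructor
    · linarith [neg_abs_le (x i - t i)]
    · linarith [le_abs_self (x i - t i)]
  linarith

lemma amalgam_bound {d : ℕ} (p q : ℝ) (hq : 1 ≤ q) (ω : (Fin d → ℝ) → ℝ)
    (f : (Fin d → ℝ) → ℂ) (K : ℝ) (hK : 0 ≤ K) (t : Fin d → ℝ)
    (h : ∀ x, ‖ω x • f x‖ ≤ K * Real.exp (-∑ i, |x i - t i|)) :
    amalgamNorm p q ω f ≤ ENNReal.ofReal K * NN d q := by
  have hq0 : 0 < q := by linarith
  have key : ∀ α : Fin d → ℤ,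
      (eLpNorm (fun x => ω x • f x) (ENNReal.ofReal p) (volume.restrict (cube α))) ^ q ≤
      ENNReal.ofReal K ^ q * (GG (α - fun i => ⌊t i⌋)) ^ q := by
    intro α
    rw [← ENNReal.mul_rpow_of_nonneg _ _ hq0.le]
    gcongr
    have hG : GG (α - fun i => ⌊t i⌋) ≠ ⊤ :=
      ENNReal.mul_ne_top ENNReal.ofReal_ne_top
        (ENNReal.prod_ne_top fun i _ => ENNReal.ofReal_ne_top)
    have hb : ∀ᵐ x ∂(volume.restrict (cube α)),
        ‖ω x • f x‖ ≤ K * (GG (α - fun i => ⌊t i⌋)).toReal := by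
      filter_upwards [ae_restrict_mem (cube_meas α)] with x hx
      refine (h x).trans (mul_le_mul_of_nonneg_left ?_ hK)
      have := ENNReal.toReal_mono hG (cube_bound α x t hx)
      rwa [ENNReal.toReal_ofReal (Real.exp_pos _).le] at this
    refine (eLpNorm_le_of_ae_bound hb).trans ?_
    rw [Measure.restrict_apply_univ, cube_vol, ENNReal.ofReal_mul hK, ENNReal.ofReal_toReal hG]
    simp
  unfold amalgamNorm NN
  calc _ ≤ (∑' α : Fin d → ℤ, ENNReal.ofReal K ^ q * (GG (α - fun i => ⌊t i⌋)) ^ q) ^ (1 / q) := by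
        gcongr with α
        exact key α
    _ = _ := by
        rw [ENNReal.tsum_mul_left, ENNReal.mul_rpow_of_nonneg _ _ (by positivity),
          ← ENNReal.rpow_mul, mul_one_div_cancel hq0.ne', ENNReal.rpow_one]
        congr 2
        exact (Equiv.subRight (fun i => ⌊t i⌋)).tsum_eq (fun α : Fin d → ℤ => GG α ^ q)

/-- translated Gaussian -/
def gs {d : ℕ} (t x : Fin d → ℝ) : ℂ := ((Real.exp (-Real.pi * ∑ i, (x i - t i) ^ 2) : ℝ) : ℂ)

lemma gs_norm {d : ℕ} (t x : Fin d → ℝ) :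
    ‖gs t x‖ = Real.exp (-Real.pi * ∑ i, (x i - t i) ^ 2) := by
  unfold gs
  rw [Complex.norm_real, Real.norm_of_nonneg (Real.exp_pos _).le]

lemma gs_meas {d : ℕ} (t : Fin d → ℝ) : Measurable (gs t) := by
  unfold gs
  fun_prop

lemma gs_fourier {d : ℕ} (t ξ : Fin d → ℝ) :
    fourierT (gs t) ξ = Complex.exp (-Real.pi * ∑ i, ((ξ i : ℂ) ^ 2 + 2 * Complex.I * t i * ξ i)) := by
  have hpi : (Real.pi : ℂ) ≠ 0 := by exact_mod_cast Real.pi_ne_zero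
  have h := GaussianFourier.integral_cexp_neg_mul_sum_add (ι := Fin d) (b := (Real.pi : ℂ))
    (by simpa using Real.pi_pos)
    (fun i => 2 * Real.pi * t i - 2 * Real.pi * Complex.I * ξ i)
  unfold fourierT gs
  have : ∀ x : Fin d → ℝ,
      Complex.exp (-(2 * (Real.pi : ℂ) * Complex.I * ∑ i, (x i : ℂ) * (ξ i : ℂ))) *
        ((Real.exp (-Real.pi * ∑ i, (x i - t i) ^ 2) : ℝ) : ℂ) =
      Complex.exp (-Real.pi * ∑ i, (t i : ℂ) ^ 2) *
      Complex.exp (-Real.pi * ∑ i, (x i : ℂ) ^ 2 +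
        ∑ i, (2 * Real.pi * t i - 2 * Real.pi * Complex.I * ξ i) * x i) := by
    intro x
    push_cast
    rw [← Complex.exp_add, ← Complex.exp_add]
    congr 1
    simp only [Finset.mul_sum, ← Finset.sum_add_distrib, ← Finset.sum_neg_distrib]
    apply Finset.sum_congr rfl
    intro i _
    ring
  simp_rw [this]
  rw [integral_const_mul, h, div_self hpi, Complex.one_cpow, one_mul, ← Complex.exp_add]
  congr 1
  simp only [Finset.mul_sum, Finset.sum_div, ← Finset.sum_add_distrib]
  apply Finset.sum_congr rfl
  intro i _
  field_simp
  ring_nf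
  rw [Complex.I_sq]
  ring

lemma gs_fourier_norm {d : ℕ} (t ξ : Fin d → ℝ) :
    ‖fourierT (gs t) ξ‖ = Real.exp (-Real.pi * ∑ i, ξ i ^ 2) := by
  rw [gs_fourier, Complex.norm_exp]
  congr 1
  rw [← Complex.ofReal_neg, Complex.re_ofReal_mul, Complex.re_sum]
  congr 1
  apply Finset.sum_congr rfl
  intro i _
  rw [Complex.add_re, ← Complex.ofReal_pow, Complex.ofReal_re]
  simp

lemma gs_fourier_meas {d : ℕ} (t : Fin d → ℝ) : Measurable (fourierT (gs t)) := by
  have : fourierT (gs t) = fun ξ => Complex.exp (-Real.pi * ∑ i, ((ξ i : ℂ) ^ 2 +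
      2 * Complex.I * t i * ξ i)) := funext (gs_fourier t)
  rw [this]
  fun_prop

lemma gs_amalgam {d : ℕ} (p : ℝ) {w : (Fin d → ℝ) → ℝ} (h : IsBeurling w) :
    ∃ K : ℝ, 0 < K ∧ ∀ t, amalgamNorm p 1 w (gs t) ≤ ENNReal.ofReal (K * w t) * NN d 1 := by
  obtain ⟨K, hK, hb⟩ := beurling_gauss h
  refine ⟨K, hK, fun t => ?_⟩
  have hw : ∀ x, 0 ≤ w x := fun x => by linarith [h.2.1 x]
  refine amalgam_bound p 1 le_rfl w _ _ (mul_nonneg hK.le (hw t)) t fun x => ?_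
  rw [norm_smul, gs_norm, Real.norm_of_nonneg (hw x)]
  have e := hb (x - t)
  have e2 := h.2.2 t (x - t)
  rw [add_sub_cancel] at e2
  simp only [Pi.sub_apply] at e
  calc _ ≤ w t * w (x - t) * Real.exp (-Real.pi * ∑ i, (x i - t i) ^ 2) := by gcongr
    _ ≤ w t * (K * Real.exp (-∑ i, |x i - t i|)) := by
      rw [mul_assoc]; exact mul_le_mul_of_nonneg_left e (hw t)
    _ = _ := by ring

lemma gs_fourier_amalgam {d : ℕ} (q r : ℝ) (hr : 1 ≤ r) {w : (Fin d → ℝ) → ℝ}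
    (h : IsBeurling w) :
    ∃ K : ℝ, 0 < K ∧ ∀ t, amalgamNorm q r w (fourierT (gs t)) ≤ ENNReal.ofReal K * NN d r := by
  obtain ⟨K, hK, hb⟩ := beurling_gauss h
  refine ⟨K, hK, fun t => ?_⟩
  have hw : ∀ x, 0 ≤ w x := fun x => by linarith [h.2.1 x]
  refine amalgam_bound q r hr w _ _ hK.le 0 fun x => ?_
  rw [norm_smul, gs_fourier_norm, Real.norm_of_nonneg (hw x)]
  simpa using hb x

lemma gs_lower {d : ℕ} (p : ℝ) (hp : 1 ≤ p) {w : (Fin d → ℝ) → ℝ} (h : IsBeurling w) :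
    ∃ c : ℝ, 0 < c ∧ ∀ t, ENNReal.ofReal (c * w t) ≤ amalgamNorm p 1 w (gs t) := by
  obtain ⟨M, a, hM, ha, hb⟩ := beurling_exp h
  have hw : ∀ x, 0 ≤ w x := fun x => by linarith [h.2.1 x]
  refine ⟨(M * Real.exp a)⁻¹ * Real.exp (-Real.pi * d), by positivity, fun t => ?_⟩
  set c := (M * Real.exp a)⁻¹ * Real.exp (-Real.pi * d) with hc
  have hc0 : 0 ≤ c := by positivity
  unfold amalgamNorm
  simp only [ENNReal.rpow_one, div_one]
  refine le_trans ?_ (ENNReal.le_tsum (fun i => ⌊t i⌋))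
  set α : Fin d → ℤ := fun i => ⌊t i⌋ with hα
  have hconst : eLpNorm (fun _ : Fin d → ℝ => c * w t) (ENNReal.ofReal p)
      (volume.restrict (cube α)) = ENNReal.ofReal (c * w t) := by
    rw [eLpNorm_const' _ (by simpa using (by linarith : 0 < p)) ENNReal.ofReal_ne_top,
      Measure.restrict_apply_univ, cube_vol, ENNReal.one_rpow, mul_one,
      Real.enorm_eq_ofReal (mul_nonneg hc0 (hw t))]
  rw [← hconst]
  refine eLpNorm_mono_ae ?_
  filter_upwards [ae_restrict_mem (cube_meas α)] with x hx
  rw [norm_smul, gs_norm, Real.norm_of_nonneg (hw x), Real.norm_of_nonneg (mul_nonneg hc0 (hw t))]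
  have hd : ∀ i, |x i - t i| ≤ 1 := by
    intro i
    have h0 := hx i (Set.mem_univ i)
    have h1 := Int.floor_le (t i)
    have h2 := Int.lt_floor_add_one (t i)
    simp only [Set.mem_Ico, hα] at h0
    rw [abs_le]
    constructor <;> linarith
  have e1 : w t ≤ w x * (M * Real.exp a) := by
    have e := h.2.2 x (t - x)
    rw [add_sub_cancel] at e
    refine e.trans (mul_le_mul_of_nonneg_left ((hb _).trans ?_) (hw x))
    gcongr
    have : ‖t - x‖ ≤ 1 := by
      refine (pi_norm_le_iff_of_nonneg zero_le_one).2 fun i => ?_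
      rw [Pi.sub_apply, Real.norm_eq_abs, abs_sub_comm]
      exact hd i
    nlinarith
  have e2 : Real.exp (-Real.pi * d) ≤ Real.exp (-Real.pi * ∑ i, (x i - t i) ^ 2) := by
    apply Real.exp_le_exp.2
    have : ∑ i, (x i - t i) ^ 2 ≤ ∑ _i : Fin d, (1 : ℝ) :=
      Finset.sum_le_sum fun i _ => (sq_le_one_iff_abs_le_one _).2 (hd i)
    simp only [Finset.sum_const, Finset.card_univ, Fintype.card_fin, nsmul_eq_mul, mul_one] at this
    nlinarith [Real.pi_pos]
  have hMp : 0 < M * Real.exp a := by positivity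
  calc c * w t = ((M * Real.exp a)⁻¹ * w t) * Real.exp (-Real.pi * d) := by rw [hc]; ring
    _ ≤ w x * Real.exp (-Real.pi * ∑ i, (x i - t i) ^ 2) := by
      refine mul_le_mul ?_ e2 (Real.exp_pos _).le (hw x)
      rw [inv_mul_le_iff₀ hMp]
      linarith

lemma amalgam_mono {d : ℕ} (p : ℝ) {w₁ w₂ : (Fin d → ℝ) → ℝ} (h1 : IsBeurling w₁)
    (h2 : IsBeurling w₂) (C : ℝ) (hC : 0 < C) (h : ∀ x, w₂ x ≤ C * w₁ x)
    (f : (Fin d → ℝ) → ℂ) :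
    amalgamNorm p 1 w₂ f ≤ ENNReal.ofReal C * amalgamNorm p 1 w₁ f := by
  unfold amalgamNorm
  simp only [ENNReal.rpow_one, div_one]
  rw [← ENNReal.tsum_mul_left]
  refine ENNReal.tsum_le_tsum fun α => ?_
  refine eLpNorm_le_mul_eLpNorm_of_ae_le_mul (Eventually.of_forall fun x => ?_) _
  rw [norm_smul, norm_smul, Real.norm_of_nonneg (by linarith [h2.2.1 x]),
    Real.norm_of_nonneg (by linarith [h1.2.1 x]), ← mul_assoc]
  exact mul_le_mul_of_nonneg_right (h x) (norm_nonneg _)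

end

/-- `A^{p,1,q,r}_{ϑ₁,ϑ}(ℝ^d)` embeds continuously into
`A^{p,1,q,r}_{ϑ₂,ϑ}(ℝ^d)` if and only if `ϑ₂ ≺ ϑ₁`. -/
theorem A_embedding_iff {d : ℕ} (p q r : ℝ) (hp : 1 ≤ p) (hq : 1 ≤ q) (hr : 1 ≤ r)
    (ϑ ϑ₁ ϑ₂ : (Fin d → ℝ) → ℝ)
    (hϑ : IsBeurling ϑ) (h1 : IsBeurling ϑ₁) (h2 : IsBeurling ϑ₂) :
    ((∀ f : (Fin d → ℝ) → ℂ, MemA p q r ϑ₁ ϑ f → MemA p q r ϑ₂ ϑ f) ∧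
      ∃ C : ℝ, 0 < C ∧ ∀ f : (Fin d → ℝ) → ℂ, MemA p q r ϑ₁ ϑ f →
        ANorm p q r ϑ₂ ϑ f ≤ ENNReal.ofReal C * ANorm p q r ϑ₁ ϑ f) ↔
    Prec ϑ₂ ϑ₁ := by
  constructor
  · rintro ⟨-, C, hC, hemb⟩
    obtain ⟨c, hc, hlow⟩ := gs_lower p hp h2
    obtain ⟨K, hK, hup⟩ := gs_amalgam p h1
    obtain ⟨Ktwo, hKtwo, huptwo⟩ := gs_fourier_amalgam q r hr hϑ
    have hN1 := NN_ne_top d 1 le_rfl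
    have hNr := NN_ne_top d r hr
    refine ⟨c⁻¹ * (C * (K * (NN d 1).toReal + Ktwo * (NN d r).toReal)) + 1, by positivity,
      fun t => ?_⟩
    have hw1 := h1.2.1 t
    have hw2 := h2.2.1 t
    have hmem : MemA p q r ϑ₁ ϑ (gs t) :=
      ⟨⟨gs_meas t, (hup t).trans_lt (ENNReal.mul_ne_top ENNReal.ofReal_ne_top hN1).lt_top⟩,
        ⟨gs_fourier_meas t,
          (huptwo t).trans_lt (ENNReal.mul_ne_top ENNReal.ofReal_ne_top hNr).lt_top⟩⟩
    have key : ENNReal.ofReal (c * ϑ₂ t) ≤ ENNReal.ofReal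
        (C * (K * ϑ₁ t * (NN d 1).toReal + Ktwo * (NN d r).toReal)) := by
      calc _ ≤ _ := hlow t
        _ ≤ ANorm p q r ϑ₂ ϑ (gs t) := le_self_add
        _ ≤ _ := hemb _ hmem
        _ ≤ ENNReal.ofReal C * (ENNReal.ofReal (K * ϑ₁ t) * NN d 1 +
              ENNReal.ofReal Ktwo * NN d r) := by
            unfold ANorm
            gcongr
            · exact hup t
            · exact huptwo t
        _ = _ := by
            rw [ENNReal.ofReal_mul hC.le, ENNReal.ofReal_add (by positivity) (by positivity),
              ENNReal.ofReal_mul (p := K * ϑ₁ t) (by positivity), ENNReal.ofReal_mul hKtwo.le,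
              ENNReal.ofReal_toReal hN1, ENNReal.ofReal_toReal hNr]
    rw [ENNReal.ofReal_le_ofReal_iff (by positivity)] at key
    have k2 : C * (K * ϑ₁ t * (NN d 1).toReal + Ktwo * (NN d r).toReal) ≤
        C * (K * (NN d 1).toReal + Ktwo * (NN d r).toReal) * ϑ₁ t := by
      have : 0 ≤ C * (Ktwo * (NN d r).toReal) := by positivity
      nlinarith
    have k3 : ϑ₂ t ≤ c⁻¹ * (C * (K * (NN d 1).toReal + Ktwo * (NN d r).toReal) * ϑ₁ t) := by
      rw [le_inv_mul_iff₀ hc]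
      exact key.trans k2
    nlinarith
  · rintro ⟨C, hC, h⟩
    have hm := amalgam_mono p h1 h2 C hC h
    refine ⟨fun f hf => ⟨⟨hf.1.1, (hm f).trans_lt
      (ENNReal.mul_ne_top ENNReal.ofReal_ne_top hf.1.2.ne).lt_top⟩, hf.2⟩,
      C + 1, by positivity, fun f _ => ?_⟩
    unfold ANorm
    rw [mul_add]
    refine add_le_add ((hm f).trans ?_) ?_
    · gcongr
      linarith
    · refine le_mul_of_one_le_left bot_le ?_
      rw [ENNReal.one_le_ofReal]
      linarith
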